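/- arXiv:2209.02306 — 2 statements merged into one kernel-verified Lean document; each statement's English description precedes it below -/
import Mathlib

section
/- Let M ∈ 𝔻ℍ[t] be a bounded monic reduced motion polynomial. Then there exist r ≥ 0, monic motion polynomials M₁, …, M_r ∈ 𝔻ℍ[t], pairwise coprime monic irreducible quadratic real polynomials N₁, …, N_r ∈ ℝ[t], and positive integers n₁, …, n_r such that M = M₁·M₂⋯M_r and ν(Mᵢ) = Nᵢ^{nᵢ} for i = 1, …, r. -/
open Polynomial DualNumber TrivSqZeroExt

noncomputable section

/-- The real quaternions. -/
abbrev Hq : Type := Quaternion ℝ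

/-- The dual quaternions. -/
abbrev DHq : Type := DualNumber Hq

/-- Conjugation of a dual quaternion: `(p + ε d)* = p* + ε d*`. -/
instance : Star DHq := ⟨fun x => inl (star x.fst) + inr (star x.snd)⟩

/-- Coefficient-wise (quaternion) conjugation of a polynomial. -/
def cstar {R : Type*} [Semiring R] [Star R] (A : R[X]) : R[X] :=
  A.sum fun n a => Polynomial.C (star a) * Polynomial.X ^ n

/-- The embedding `ℝ[t] → ℍ[t]`. -/
def qPoly (f : ℝ[X]) : Hq[X] := f.map (algebraMap ℝ Hq)

/-- The embedding `ℍ[t] → 𝔻ℍ[t]` (primal part). -/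
def dhQ (P : Hq[X]) : DHq[X] := P.map (inlHom Hq Hq)

/-- The embedding `ℝ[t] → 𝔻ℍ[t]`. -/
def dPoly (f : ℝ[X]) : DHq[X] := dhQ (qPoly f)

/-- The dual quaternion polynomial `P + ε D` with primal part `P` and dual part `D`. -/
def mp (P D : Hq[X]) : DHq[X] := dhQ P + Polynomial.C ε * dhQ D

/-- The primal part of a dual quaternion polynomial. -/
def primal (A : DHq[X]) : Hq[X] := A.map (fstHom ℝ Hq Hq).toRingHom

/-- A motion polynomial: a dual quaternion polynomial whose norm polynomial
`ν(M) = M·M*` is a nonzero real polynomial. -/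
def IsMotion (M : DHq[X]) : Prop := ∃ f : ℝ[X], f ≠ 0 ∧ M * cstar M = dPoly f

/-- A real polynomial divides a quaternion polynomial. -/
def RDvdQ (f : ℝ[X]) (A : Hq[X]) : Prop := ∃ B : Hq[X], A = qPoly f * B

/-- A real polynomial divides a dual quaternion polynomial. -/
def RDvdD (f : ℝ[X]) (A : DHq[X]) : Prop := ∃ B : DHq[X], A = dPoly f * B

/-- `g` is the greatest common monic real polynomial divisor of a quaternion polynomial `A`
(with itself), i.e. `g = mrpf A`. -/
def IsMrpfQ (g : ℝ[X]) (A : Hq[X]) : Prop :=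
  g.Monic ∧ RDvdQ g A ∧ ∀ f : ℝ[X], f.Monic → RDvdQ f A → f ∣ g

/-- `g` is the greatest common monic real polynomial divisor of `c ∈ ℝ[t]` and a quaternion
polynomial `A`, i.e. `g = mrpf(c, A)`. -/
def IsMrpf2 (g : ℝ[X]) (c : ℝ[X]) (A : Hq[X]) : Prop :=
  g.Monic ∧ g ∣ c ∧ RDvdQ g A ∧
    ∀ f : ℝ[X], f.Monic → f ∣ c → RDvdQ f A → f ∣ g

/-- `g` is the greatest common monic real polynomial divisor of `c ∈ ℝ[t]` and two quaternion
polynomials `A` and `B`, i.e. `g = mrpf(c, A, B)`. -/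
def IsMrpf3 (g : ℝ[X]) (c : ℝ[X]) (A B : Hq[X]) : Prop :=
  g.Monic ∧ g ∣ c ∧ RDvdQ g A ∧ RDvdQ g B ∧
    ∀ f : ℝ[X], f.Monic → f ∣ c → RDvdQ f A → RDvdQ f B → f ∣ g

/-- A quaternion polynomial is reduced: `mrpf = 1`, i.e. it has only constant real
polynomial factors. -/
def ReducedQ (A : Hq[X]) : Prop := ∀ f : ℝ[X], f.Monic → RDvdQ f A → f = 1

/-- A dual quaternion polynomial is reduced: `mrpf = 1`. -/
def ReducedD (A : DHq[X]) : Prop := ∀ f : ℝ[X], f.Monic → RDvdD f A → f = 1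

/-- Boundedness of a (monic reduced) motion polynomial: `mrpf` of its primal part has
no real root, equivalently no linear real polynomial `t - a` divides the primal part. -/
def BoundedD (M : DHq[X]) : Prop :=
  ∀ a : ℝ, ¬ RDvdQ (Polynomial.X - Polynomial.C a) (primal M)

/-- A generic motion polynomial: monic, a motion polynomial, with `mrpf` of the primal
part equal to `1`. -/
def GenericD (M : DHq[X]) : Prop :=
  M.Monic ∧ IsMotion M ∧ ReducedQ (primal M)

/-- The monic linear dual quaternion polynomial `t - p - ε d`. -/
def lin (p d : Hq) : DHq[X] := mp (Polynomial.X - Polynomial.C p) (-Polynomial.C d)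

/-- `M` admits a factorization into monic linear motion polynomial factors. -/
def HasLinFact (M : DHq[X]) : Prop :=
  ∃ L : List DHq, (∀ h ∈ L, IsMotion (Polynomial.X - Polynomial.C h)) ∧
    M = (L.map fun h => Polynomial.X - Polynomial.C h).prod

end

section helpers
lemma cstar_coeff {R : Type*} [Semiring R] [StarRing R] (A : R[X]) (n : ℕ) :
    (cstar A).coeff n = star (A.coeff n) := by
  unfold cstar
  rw [Polynomial.sum_def, Polynomial.finsetSum_coeff]
  simp only [Polynomial.coeff_C_mul, Polynomial.coeff_X_pow]
  by_cases h : n ∈ A.support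
  · rw [Finset.sum_eq_single n] <;> simp_all +contextual [eq_comm]
  · have : A.coeff n = 0 := by simpa using h
    rw [this, star_zero]
    apply Finset.sum_eq_zero
    intro m hm
    have : n ≠ m := by rintro rfl; exact h hm
    simp [this]

lemma dstar_coeff (A : DHq[X]) (n : ℕ) :
    (cstar A).coeff n = star (A.coeff n) := by
  unfold cstar
  rw [Polynomial.sum_def, Polynomial.finsetSum_coeff]
  simp only [Polynomial.coeff_C_mul, Polynomial.coeff_X_pow]
  by_cases h : n ∈ A.support
  · rw [Finset.sum_eq_single n] <;> simp_all +contextual [eq_comm]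
  · have : A.coeff n = 0 := by simpa using h
    have h0 : star (0 : DHq) = 0 := by
      change inl (star (0:DHq).fst) + inr (star (0:DHq).snd) = (0 : DHq)
      simp
    rw [this, h0]
    apply Finset.sum_eq_zero
    intro m hm
    have : n ≠ m := by rintro rfl; exact h hm
    simp [this]

lemma cstar_add' (A B : Hq[X]) : cstar (A + B) = cstar A + cstar B := by
  ext1 n; simp only [cstar_coeff, coeff_add, star_add]
lemma cstar_neg' (A : Hq[X]) : cstar (-A) = - cstar A := by
  ext1 n; simp only [cstar_coeff, coeff_neg, star_neg]
lemma cstar_sub' (A B : Hq[X]) : cstar (A - B) = cstar A - cstar B := by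
  ext1 n; simp only [cstar_coeff, coeff_sub, star_sub]
lemma cstar_cstar' (A : Hq[X]) : cstar (cstar A) = A := by
  ext1 n; simp only [cstar_coeff, star_star]
lemma cstar_mul' (A B : Hq[X]) : cstar (A * B) = cstar B * cstar A := by
  ext1 n
  simp only [cstar_coeff, coeff_mul, star_sum, star_mul]
  rw [← Finset.Nat.sum_antidiagonal_swap]; rfl
lemma cstar_C' (a : Hq) : cstar (C a : Hq[X]) = C (star a) := by
  ext1 n; simp only [cstar_coeff, coeff_C]; split_ifs <;> simp
lemma cstar_X' : cstar (X : Hq[X]) = X := by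
  ext1 n; simp only [cstar_coeff, coeff_X]; split_ifs <;> simp
lemma cstar_qPoly (f : ℝ[X]) : cstar (qPoly f) = qPoly f := by
  ext1 n; simp [cstar_coeff, qPoly, coeff_map]
lemma natDegree_cstar (A : Hq[X]) : (cstar A).natDegree = A.natDegree := by
  have : (cstar A).support = A.support := by
    ext n; simp [cstar_coeff]
  simp [natDegree, degree, this]
lemma degree_cstar (A : Hq[X]) : (cstar A).degree = A.degree := by
  have : (cstar A).support = A.support := by
    ext n; simp [cstar_coeff]
  simp [degree, this]
lemma monic_cstar {A : Hq[X]} (h : A.Monic) : (cstar A).Monic := by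
  unfold Monic leadingCoeff
  rw [natDegree_cstar, cstar_coeff]
  have : A.coeff A.natDegree = 1 := h
  rw [this, star_one]

lemma qPoly_mul (f g : ℝ[X]) : qPoly (f * g) = qPoly f * qPoly g := by simp [qPoly]
lemma qPoly_add (f g : ℝ[X]) : qPoly (f + g) = qPoly f + qPoly g := by simp [qPoly]
lemma qPoly_one : qPoly 1 = 1 := by simp [qPoly]
lemma qPoly_inj : Function.Injective qPoly :=
  Polynomial.map_injective _ (algebraMap ℝ Hq).injective
lemma qPoly_comm (f : ℝ[X]) (A : Hq[X]) : qPoly f * A = A * qPoly f := by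
  unfold qPoly
  induction f using Polynomial.induction_on' with
  | add p q hp hq => rw [Polynomial.map_add, add_mul, mul_add, hp, hq]
  | monomial n a =>
    rw [Polynomial.map_monomial]
    ext1 k
    rw [← C_mul_X_pow_eq_monomial, mul_assoc, X_pow_mul, ← mul_assoc, ← mul_assoc]
    congr 2
    ext1 m
    rw [coeff_C_mul, coeff_mul_C, Algebra.commutes]
lemma qPoly_monic {f : ℝ[X]} (h : f.Monic) : (qPoly f).Monic := h.map _
lemma qPoly_natDegree (f : ℝ[X]) : (qPoly f).natDegree = f.natDegree :=
  natDegree_map _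
lemma qPoly_degree (f : ℝ[X]) : (qPoly f).degree = f.degree :=
  degree_map _ _
lemma qPoly_ne {f : ℝ[X]} (h : f ≠ 0) : qPoly f ≠ 0 := by
  intro h0; apply h; apply qPoly_inj; rw [h0]; simp [qPoly]

/-- norms commute -/
lemma star_mul_of {P : Hq[X]} {f : ℝ[X]} (hP : P ≠ 0) (h : P * cstar P = qPoly f) :
    cstar P * P = qPoly f := by
  apply mul_left_cancel₀ hP
  rw [← mul_assoc, h, qPoly_comm]

/-! `mp` API -/
lemma mp_coeff (P D : Hq[X]) (n : ℕ) :
    (mp P D).coeff n = inl (P.coeff n) + inr (D.coeff n) := by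
  unfold mp dhQ
  rw [coeff_add, coeff_C_mul, coeff_map, coeff_map]
  apply TrivSqZeroExt.ext <;> simp
lemma mp_inj {P D P' D' : Hq[X]} (h : mp P D = mp P' D') : P = P' ∧ D = D' := by
  have key := fun n => congrArg (fun A => Polynomial.coeff A n) h
  simp only [mp_coeff] at key
  constructor
  · ext1 n; simpa using congrArg fst (key n)
  · ext1 n; simpa using congrArg snd (key n)
lemma exists_mp (M : DHq[X]) : ∃ P D, M = mp P D := by
  induction M using Polynomial.induction_on' with
  | add p q hp hq =>
    obtain ⟨P, D, rfl⟩ := hp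
    obtain ⟨P', D', rfl⟩ := hq
    refine ⟨P + P', D + D', ?_⟩
    ext1 n
    simp only [coeff_add, mp_coeff]
    apply TrivSqZeroExt.ext <;> simp
  | monomial n a =>
    refine ⟨monomial n a.fst, monomial n a.snd, ?_⟩
    ext1 k
    simp only [mp_coeff, coeff_monomial]
    split_ifs
    · exact (inl_fst_add_inr_snd_eq a).symm
    · simp
lemma mp_mul (P D P' D' : Hq[X]) :
    mp P D * mp P' D' = mp (P * P') (P * D' + D * P') := by
  ext1 n
  simp only [mp_coeff, coeff_mul, coeff_add]
  apply TrivSqZeroExt.ext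
  · simp [fst_sum]
  · simp [snd_sum, Finset.sum_add_distrib]
lemma mp_cstar (P D : Hq[X]) : cstar (mp P D) = mp (cstar P) (cstar D) := by
  ext1 n
  rw [dstar_coeff, mp_coeff, mp_coeff, cstar_coeff, cstar_coeff]
  change inl (star (fst _)) + inr (star (snd _)) = _
  simp
lemma dPoly_eq (f : ℝ[X]) : dPoly f = mp (qPoly f) 0 := by
  simp [dPoly, mp, dhQ]
lemma primal_mp (P D : Hq[X]) : primal (mp P D) = P := by
  ext1 n
  unfold primal
  rw [coeff_map, mp_coeff]
  simp
lemma mp_one : mp 1 0 = 1 := by simp [mp, dhQ]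

lemma mp_norm_iff (P D : Hq[X]) (f : ℝ[X]) :
    mp P D * cstar (mp P D) = dPoly f ↔
      P * cstar P = qPoly f ∧ P * cstar D + D * cstar P = 0 := by
  rw [mp_cstar, mp_mul, dPoly_eq]
  constructor
  · exact mp_inj
  · rintro ⟨h1, h2⟩; rw [h1, h2]

lemma mp_monic {P D : Hq[X]} (hP : P.Monic) (hD : D.degree < P.degree) : (mp P D).Monic := by
  rw [degree_eq_natDegree hP.ne_zero] at hD
  apply monic_of_natDegree_le_of_coeff_eq_one P.natDegree
  · rw [natDegree_le_iff_coeff_eq_zero]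
    intro k hk
    rw [mp_coeff, coeff_eq_zero_of_natDegree_lt hk, coeff_eq_zero_of_degree_lt]
    · simp
    · exact hD.trans (by exact_mod_cast hk)
  · rw [mp_coeff, coeff_eq_zero_of_degree_lt hD]
    have : P.coeff P.natDegree = 1 := hP
    rw [this]; simp
lemma of_mp_monic {P D : Hq[X]} (h : (mp P D).Monic) : P.Monic ∧ D.degree < P.degree := by
  set n := (mp P D).natDegree with hn
  have h1 : (mp P D).coeff n = 1 := h
  have hk : ∀ k, n < k → (mp P D).coeff k = 0 := fun k hk => coeff_eq_zero_of_natDegree_lt hk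
  simp only [mp_coeff] at h1 hk
  have hPn : P.coeff n = 1 := by simpa using congrArg fst h1
  have hDn : D.coeff n = 0 := by simpa using congrArg snd h1
  have hPk : ∀ k, n < k → P.coeff k = 0 := fun k h => by simpa using congrArg fst (hk k h)
  have hDk : ∀ k, n < k → D.coeff k = 0 := fun k h => by simpa using congrArg snd (hk k h)
  have hPd : P.natDegree ≤ n := natDegree_le_iff_coeff_eq_zero.2 hPk
  have hPm : P.Monic := monic_of_natDegree_le_of_coeff_eq_one n hPd hPn
  refine ⟨hPm, ?_⟩
  have : (n : WithBot ℕ) ≤ P.degree := le_degree_of_ne_zero (by rw [hPn]; exact one_ne_zero)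
  refine lt_of_lt_of_le ?_ this
  rw [degree_lt_iff_coeff_zero]
  intro m hm
  rcases hm.eq_or_lt with rfl | h
  · exact hDn
  · exact hDk m h

end helpers

section main_part

lemma rem_norm {N : ℝ[X]} {P Q R A : Hq[X]} (hP : P = qPoly N * Q + R)
    (h : P * cstar P = qPoly N * A) : ∃ B, R * cstar R = qPoly N * B := by
  refine ⟨A - Q * cstar P - R * cstar Q, ?_⟩
  have hc : cstar P = qPoly N * cstar Q + cstar R := by
    rw [hP, cstar_add', cstar_mul', cstar_qPoly, ← qPoly_comm]
  have e : P * cstar P = qPoly N * (Q * cstar P) + qPoly N * (R * cstar Q) + R * cstar R := by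
    calc P * cstar P = (qPoly N * Q + R) * cstar P := by rw [← hP]
      _ = qPoly N * (Q * cstar P) + R * cstar P := by rw [add_mul, mul_assoc]
      _ = qPoly N * (Q * cstar P) + (R * (qPoly N * cstar Q) + R * cstar R) := by
          rw [← mul_add R, ← hc]
      _ = _ := by rw [← mul_assoc R, ← qPoly_comm N R, mul_assoc, add_assoc]
  rw [mul_sub, mul_sub, ← h, e]; abel

lemma exists_divmod {N : ℝ[X]} (hN : N.Monic) (P : Hq[X]) :
    ∃ Q R : Hq[X], P = qPoly N * Q + R ∧ R.degree < N.degree := by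
  refine ⟨P /ₘ qPoly N, P %ₘ qPoly N, ?_, ?_⟩
  · rw [add_comm, modByMonic_add_div]
  · rw [← qPoly_degree]; exact degree_modByMonic_lt _ (qPoly_monic hN)

lemma root_dvd {a : ℝ} {P A : Hq[X]} (h : P * cstar P = qPoly (X - C a) * A) :
    RDvdQ (X - C a) P := by
  obtain ⟨Q, R, hQ, hR⟩ := exists_divmod (monic_X_sub_C a) P
  obtain ⟨B, hB⟩ := rem_norm hQ h
  rw [degree_X_sub_C] at hR
  have hR1 : (R * cstar R) = 0 := by
    by_contra hne
    have hB0 : B ≠ 0 := by rintro rfl; simp at hB; exact hne (by simpa using hB)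
    have h1 := congrArg natDegree hB
    have hRne : R ≠ 0 := by rintro rfl; simp at hne
    have : R.natDegree = 0 := by
      have := natDegree_lt_natDegree (q := (X : Hq[X])) hRne (by rw [degree_X]; exact hR)
      rw [natDegree_X] at this; omega
    have hN0 := (qPoly_monic (monic_X_sub_C a)).ne_zero
    rw [natDegree_mul hN0 hB0, qPoly_natDegree, natDegree_X_sub_C,
      natDegree_mul (left_ne_zero_of_mul hne) (right_ne_zero_of_mul hne), natDegree_cstar] at h1
    omega
  have : R = 0 := by
    rcases mul_eq_zero.1 hR1 with h | h
    · exact h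
    · rw [← cstar_cstar' R, h]; ext1 n; simp [cstar_coeff]
  exact ⟨Q, by rw [hQ, this, add_zero]⟩

lemma lin_factor {N : ℝ[X]} (hN : N.Monic) (hN2 : N.natDegree = 2)
    (hh : ∃ h0 : Hq, (X - C h0) * cstar (X - C h0) = qPoly N)
    {P A : Hq[X]} (h : P * cstar P = qPoly N * A) :
    ∃ L P' : Hq[X], L.Monic ∧ L * cstar L = qPoly N ∧ P = L * P' := by
  obtain ⟨Q, R, hQ, hR⟩ := exists_divmod hN P
  obtain ⟨B, hB⟩ := rem_norm hQ h
  by_cases hR0 : R = 0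
  · obtain ⟨h0, hh⟩ := hh
    refine ⟨X - C h0, cstar (X - C h0) * Q, monic_X_sub_C _, hh, ?_⟩
    rw [← mul_assoc, hh, hQ, hR0, add_zero]
  have hRc : cstar R ≠ 0 := by
    intro h; apply hR0; rw [← cstar_cstar' R, h]; ext1 n; simp [cstar_coeff]
  have hRd : R.natDegree < 2 := by
    rw [← hN2]; exact natDegree_lt_natDegree hR0 hR
  have hB0 : B ≠ 0 := by
    rintro rfl
    rw [mul_zero] at hB
    exact (mul_ne_zero hR0 hRc) hB
  have hdeg := congrArg natDegree hB
  rw [natDegree_mul (qPoly_monic hN).ne_zero hB0, qPoly_natDegree, hN2,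
    natDegree_mul hR0 hRc, natDegree_cstar] at hdeg
  have hR1 : R.natDegree = 1 := by omega
  have hBd : B.natDegree = 0 := by omega
  obtain ⟨r, hr, s, hrs⟩ := natDegree_eq_one.1 hR1
  set u : Hq := -(s * r⁻¹) with hu
  have hRL : R = (X - C u) * C r := by
    rw [← hrs, sub_mul, ← C_mul, X_mul_C, hu]
    simp [hr]
  set L : Hq[X] := X - C u with hL
  have hLm : L.Monic := monic_X_sub_C u
  have hLd : L.natDegree = 1 := natDegree_X_sub_C u
  have hcr : C r * cstar (C r : Hq[X]) = qPoly (C (Quaternion.normSq r)) := by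
    rw [cstar_C', ← C_mul, Quaternion.self_mul_star]
    simp [qPoly]
  have hn0 : Quaternion.normSq r ≠ 0 := by simpa using hr
  have e1 : L * cstar L * qPoly (C (Quaternion.normSq r)) = qPoly N * B := by
    rw [← hB, hRL, cstar_mul', mul_assoc, mul_assoc, ← mul_assoc (C r), hcr, qPoly_comm]
  have e2 : L * cstar L = qPoly N * (B * qPoly (C (Quaternion.normSq r)⁻¹)) := by
    rw [← mul_assoc, ← e1, mul_assoc, ← qPoly_mul, ← C_mul, mul_inv_cancel₀ hn0]
    simp [qPoly_one]
  have hm : (L * cstar L).Monic := hLm.mul (monic_cstar hLm)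
  rw [e2] at hm
  have hm' := (qPoly_monic hN).of_mul_monic_left hm
  have hd1 := congrArg natDegree e2
  rw [hLm.natDegree_mul (monic_cstar hLm), natDegree_cstar, hLd,
    (qPoly_monic hN).natDegree_mul hm', qPoly_natDegree, hN2] at hd1
  have hone := hm'.natDegree_eq_zero.1 (by omega)
  rw [hone, mul_one] at e2
  refine ⟨L, cstar L * Q + C r, hLm, e2, ?_⟩
  rw [mul_add, ← mul_assoc, e2, ← hRL, hQ]

lemma cancel_norm {P1 P2 : Hq[X]} {F G : ℝ[X]} (hP1 : P1 ≠ 0) (hF : F ≠ 0)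
    (h1 : P1 * cstar P1 = qPoly F)
    (h : (P1 * P2) * cstar (P1 * P2) = qPoly (F * G)) : P2 * cstar P2 = qPoly G := by
  have h1' := star_mul_of hP1 h1
  have hF0 := qPoly_ne hF
  apply mul_left_cancel₀ hF0
  apply mul_right_cancel₀ hF0
  calc qPoly F * (P2 * cstar P2) * qPoly F
      = cstar P1 * ((P1 * P2) * cstar (P1 * P2)) * P1 := by
        rw [cstar_mul']
        nth_rewrite 1 [← h1']
        nth_rewrite 1 [← h1']
        simp only [mul_assoc]
    _ = _ := by
        rw [h, qPoly_mul, ← qPoly_mul, ← qPoly_comm, mul_assoc, h1', qPoly_mul]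

lemma quat_split {N : ℝ[X]} (hN : N.Monic) (hN2 : N.natDegree = 2)
    (hh : ∃ h0 : Hq, (X - C h0) * cstar (X - C h0) = qPoly N) (G : ℝ[X]) (n : ℕ) :
    ∀ P : Hq[X], P.Monic → P * cstar P = qPoly (N ^ n * G) →
    ∃ P1 P2 : Hq[X], P1.Monic ∧ P2.Monic ∧ P = P1 * P2 ∧ P1 * cstar P1 = qPoly (N ^ n) ∧
      P2 * cstar P2 = qPoly G := by
  induction n with
  | zero =>
    intro P hP h
    refine ⟨1, P, monic_one, hP, (one_mul P).symm, ?_, by simpa using h⟩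
    have : (1 : Hq[X]) = qPoly 1 := qPoly_one.symm
    rw [one_mul, pow_zero, this, cstar_qPoly]
  | succ n ih =>
    intro P hP h
    have e : N ^ (n+1) * G = N * (N ^ n * G) := by ring
    rw [e] at h
    obtain ⟨L, P', hL, hLN, rfl⟩ := lin_factor hN hN2 hh (h.trans (qPoly_mul _ _))
    have hP' : P'.Monic := hL.of_mul_monic_left hP
    have h' := cancel_norm hL.ne_zero hN.ne_zero hLN h
    obtain ⟨P1, P2, hP1, hP2, rfl, h1, h2⟩ := ih P' hP' h'
    refine ⟨L * P1, P2, hL.mul hP1, hP2, (mul_assoc _ _ _).symm, ?_, h2⟩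
    rw [cstar_mul', mul_assoc, ← mul_assoc P1, h1, qPoly_comm, ← mul_assoc, hLN, pow_succ',
      qPoly_mul]

lemma dual_split {F G : ℝ[X]} (hF : F.Monic) (hG : G.Monic) (hco : IsCoprime F G)
    {P1 P2 D : Hq[X]} (hP1 : P1.Monic) (hP2 : P2.Monic)
    (h1 : P1 * cstar P1 = qPoly F) (h2 : P2 * cstar P2 = qPoly G)
    (hD : D.degree < (P1 * P2).degree)
    (hpure : (P1 * P2) * cstar D + D * cstar (P1 * P2) = 0) :
    ∃ D1 D2 : Hq[X], D1.degree < P1.degree ∧ D2.degree < P2.degree ∧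
      P1 * cstar D1 + D1 * cstar P1 = 0 ∧ P2 * cstar D2 + D2 * cstar P2 = 0 ∧
      D = P1 * D2 + D1 * P2 := by
  obtain ⟨a, b, hab⟩ := hco
  have h1' := star_mul_of hP1.ne_zero h1
  have h2' := star_mul_of hP2.ne_zero h2
  have hF0 := qPoly_ne hF.ne_zero
  have hab' : qPoly a * qPoly F + qPoly b * qPoly G = 1 := by
    rw [← qPoly_mul, ← qPoly_mul, ← qPoly_add, hab, qPoly_one]
  set W := cstar P1 * D * cstar P2 with hW
  have hWp : cstar W = -W := by
    apply mul_left_cancel₀ hF0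
    have e : cstar P1 * ((P1 * P2) * cstar D + D * cstar (P1 * P2)) * P1 = 0 := by
      rw [hpure]; simp
    rw [eq_comm, ← sub_eq_zero]
    have e2 : cstar P1 * ((P1 * P2) * cstar D + D * cstar (P1 * P2)) * P1 =
        (cstar P1 * P1) * (P2 * cstar D * P1) + W * (cstar P1 * P1) := by
      rw [hW, cstar_mul']; noncomm_ring
    rw [e2, h1', ← qPoly_comm] at e
    have hcW : cstar W = P2 * cstar D * P1 := by
      rw [hW, cstar_mul', cstar_mul', cstar_cstar', cstar_cstar', mul_assoc]
    rw [hcW, mul_neg, ← neg_eq_zero, ← e]; abel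
  have hbW : cstar (qPoly b * W) = -(qPoly b * W) := by
    rw [cstar_mul', cstar_qPoly, hWp, neg_mul, qPoly_comm]
  obtain ⟨K, E, hKE, hE⟩ := exists_divmod hF (qPoly b * W)
  have hKEp : cstar K = -K ∧ cstar E = -E := by
    have e : qPoly F * (cstar K + K) + (cstar E + E) = 0 := by
      have := hbW
      rw [hKE, cstar_add', cstar_mul', cstar_qPoly, ← qPoly_comm] at this
      rw [mul_add, ← sub_eq_zero.2 this]; abel
    have hEE : (cstar E + E).degree < (qPoly F).degree := by
      rw [qPoly_degree]
      refine lt_of_le_of_lt (degree_add_le _ _) ?_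
      rw [degree_cstar, max_self]; exact hE
    have := div_modByMonic_unique (f := 0) (cstar K + K) (cstar E + E) (qPoly_monic hF)
      ⟨by rw [add_comm, e], hEE⟩
    rw [zero_divByMonic, zero_modByMonic] at this
    exact ⟨eq_neg_of_add_eq_zero_left this.1.symm, eq_neg_of_add_eq_zero_left this.2.symm⟩
  obtain ⟨hKp, hEp⟩ := hKEp
  set D1 := qPoly b * D * cstar P2 - P1 * K with hD1
  set D2 := qPoly a * cstar P1 * D + K * P2 with hD2
  have hE1 : cstar P1 * D1 = E := by
    have : E = qPoly b * W - qPoly F * K := by rw [hKE]; abel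
    rw [this, hD1, mul_sub, ← mul_assoc _ P1, h1', hW]
    simp only [← mul_assoc]
    rw [qPoly_comm b (cstar P1)]
  have hE2 : D2 * cstar P2 = qPoly a * W + K * qPoly G := by
    rw [hD2, add_mul, mul_assoc K, h2, hW]; simp only [mul_assoc]
  have hsum : D = P1 * D2 + D1 * P2 := by
    have : P1 * D2 + D1 * P2 = (P1 * qPoly a) * cstar P1 * D + qPoly b * D * (cstar P2 * P2) := by
      rw [hD1, hD2]; noncomm_ring
    rw [this, h2', ← qPoly_comm, mul_assoc (qPoly a), h1, mul_assoc (qPoly b), ← qPoly_comm G,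
      ← mul_assoc (qPoly b), ← add_mul, hab', one_mul]
  have hd1 : D1.degree < P1.degree := by
    by_cases h0 : D1 = 0
    · rw [h0, degree_zero]; exact bot_lt_iff_ne_bot.2 (by simpa using hP1.ne_zero)
    have hcP1 := monic_cstar hP1
    have hE0 : E ≠ 0 := by rw [← hE1]; exact mul_ne_zero hcP1.ne_zero h0
    have hEn := natDegree_lt_natDegree hE0 hE
    have e1 := congrArg natDegree hE1
    have e2 := congrArg natDegree h1
    rw [natDegree_mul hcP1.ne_zero h0, natDegree_cstar] at e1
    rw [natDegree_mul hP1.ne_zero hcP1.ne_zero, natDegree_cstar, qPoly_natDegree] at e2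
    exact degree_lt_degree (by omega)
  refine ⟨D1, D2, hd1, ?_, ?_, ?_, hsum⟩
  · have e : P1 * D2 = D - D1 * P2 := by nth_rewrite 1 [hsum]; abel
    have hlt : (P1 * D2).degree < (P1 * P2).degree := by
      rw [e]
      refine lt_of_le_of_lt (degree_sub_le _ _) (max_lt hD ?_)
      rw [degree_mul, degree_mul]
      exact WithBot.add_lt_add_right (by simpa using hP2.ne_zero) hd1
    rw [degree_mul, degree_mul] at hlt
    exact lt_of_add_lt_add_left hlt
  · apply mul_left_cancel₀ hF0
    apply mul_left_cancel₀ (monic_cstar hP1).ne_zero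
    apply mul_right_cancel₀ hP1.ne_zero
    have hcE : cstar D1 * P1 = -E := by
      rw [← hEp, ← hE1, cstar_mul', cstar_cstar']
    have : cstar P1 * (P1 * cstar D1 + D1 * cstar P1) * P1 = 0 := by
      calc _ = (cstar P1 * P1) * (cstar D1 * P1) + (cstar P1 * D1) * (cstar P1 * P1) := by
            noncomm_ring
        _ = 0 := by rw [h1', hcE, hE1, qPoly_comm, neg_mul, neg_add_cancel]
    rw [← mul_assoc (cstar P1), ← qPoly_comm, mul_assoc (qPoly F), mul_assoc (qPoly F), this]
    simp
  · have e : cstar (D2 * cstar P2) = -(D2 * cstar P2) := by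
      rw [hE2, cstar_add', cstar_mul' _ W, cstar_mul' K, cstar_qPoly, cstar_qPoly, hWp, hKp,
        qPoly_comm a W, qPoly_comm G]
      noncomm_ring
    rw [cstar_mul', cstar_cstar'] at e
    rw [e, neg_add_cancel]

lemma exists_quad {f : ℝ[X]} (hf : f.natDegree ≠ 0) (hroot : ∀ a, ¬ f.IsRoot a) :
    ∃ N : ℝ[X], N ∣ f ∧ N.Monic ∧ N.natDegree = 2 ∧ Irreducible N ∧
      ∃ h0 : Hq, (X - C h0) * cstar (X - C h0) = qPoly N := by
  obtain ⟨z, hz⟩ := IsAlgClosed.exists_aeval_eq_zero ℂ f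
    (fun h => hf (natDegree_eq_of_degree_eq_some h))
  have him : z.im ≠ 0 := by
    intro h
    apply hroot z.re
    have : z = ((z.re : ℝ) : ℂ) := Complex.ext rfl (by simp [h])
    rw [this] at hz
    have h2 : aeval (algebraMap ℝ ℂ z.re) f = 0 := hz
    rw [aeval_algebraMap_apply] at h2
    simpa [IsRoot] using h2
  have hdvd := quadratic_dvd_of_aeval_eq_zero_im_ne_zero f hz him
  set N : ℝ[X] := X ^ 2 - C (2 * z.re) * X + C (‖z‖ ^ 2) with hNdef
  have hd : N.natDegree = 2 := by rw [hNdef]; compute_degree!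
  have hm : N.Monic := by rw [hNdef]; monicity!
  obtain ⟨h, e1, e2⟩ : ∃ h : Hq, h + star h = algebraMap ℝ Hq (2 * z.re) ∧
      h * star h = algebraMap ℝ Hq (‖z‖ ^ 2) := by
    obtain ⟨h, q1, q2, q3, q4⟩ : ∃ h : Hq, h.re = z.re ∧ h.imI = z.im ∧ h.imJ = 0 ∧ h.imK = 0 :=
      ⟨⟨z.re, z.im, 0, 0⟩, rfl, rfl, rfl, rfl⟩
    refine ⟨h, ?_, ?_⟩
    · ext <;> simp [q1, q2, q3, q4] <;> ring
    · rw [Complex.sq_norm, Complex.normSq_apply]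
      ext <;> simp [q1, q2, q3, q4] <;> ring
  refine ⟨N, hdvd, hm, hd, ?_, h, ?_⟩
  · refine (hm.irreducible_iff_roots_eq_zero_of_degree_le_three (by omega) (by omega)).2 ?_
    apply Multiset.eq_zero_of_forall_notMem
    intro a ha
    exact hroot a ((isRoot_of_mem_roots ha).dvd hdvd)
  · rw [cstar_sub', cstar_X', cstar_C']
    simp only [hNdef, qPoly, Polynomial.map_add, Polynomial.map_sub, Polynomial.map_mul,
      Polynomial.map_pow, Polynomial.map_C, Polynomial.map_X]
    rw [← e1, ← e2, C_add, C_mul, sub_mul, mul_sub, mul_sub, X_mul_C, add_mul, sq]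
    abel

lemma main_aux (d : ℕ) : ∀ (f : ℝ[X]), f.natDegree = d → f.Monic → (∀ a, ¬ f.IsRoot a) →
    ∀ M : DHq[X], M.Monic → M * cstar M = dPoly f →
    ∃ (r : ℕ) (Ms : Fin r → DHq[X]) (Ns : Fin r → ℝ[X]) (ns : Fin r → ℕ),
      (∀ i, (Ms i).Monic) ∧
      (∀ i, (Ns i).Monic ∧ Irreducible (Ns i) ∧ (Ns i).natDegree = 2) ∧
      (∀ i j, i ≠ j → IsCoprime (Ns i) (Ns j)) ∧
      (∀ i, 0 < ns i) ∧
      (∀ i, Ms i * cstar (Ms i) = dPoly (Ns i ^ ns i)) ∧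
      M = (List.ofFn Ms).prod ∧ ∀ i, Ns i ∣ f := by
  induction d using Nat.strong_induction_on with
  | _ d ih =>
  intro f hfd hf hroot M hM hMf
  obtain ⟨P, D, rfl⟩ := exists_mp M
  obtain ⟨hPm, hDd⟩ := of_mp_monic hM
  obtain ⟨hPf, hPD⟩ := (mp_norm_iff P D f).1 hMf
  by_cases hd0 : f.natDegree = 0
  · have e := congrArg natDegree hPf
    rw [hPm.natDegree_mul (monic_cstar hPm), natDegree_cstar, qPoly_natDegree, hd0] at e
    have hP1 : P = 1 := hPm.natDegree_eq_zero.1 (by omega)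
    subst hP1
    have hD0 : D = 0 := by
      rw [degree_one] at hDd
      by_contra h
      exact absurd (zero_le_degree_iff.2 h) (not_le.2 hDd)
    subst hD0
    refine ⟨0, Fin.elim0, Fin.elim0, Fin.elim0, fun i => i.elim0, fun i => i.elim0,
      fun i => i.elim0, fun i => i.elim0, fun i => i.elim0, ?_, fun i => i.elim0⟩
    simp [mp_one]
  obtain ⟨N, hNf, hNm, hN2, hNi, hh⟩ := exists_quad hd0 hroot
  have hfin : FiniteMultiplicity N f :=
    FiniteMultiplicity.of_prime_left hNi.prime hf.ne_zero
  obtain ⟨G, hG, hNG⟩ := hfin.exists_eq_pow_mul_and_not_dvd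
  set n := multiplicity N f with hn
  have hn0 : 0 < n := by
    rcases Nat.eq_zero_or_pos n with h | h
    · rw [h, pow_zero, one_mul] at hG; exact absurd (hG ▸ hNf) hNG
    · exact h
  have hFm : (N ^ n).Monic := hNm.pow n
  have hGm : G.Monic := hFm.of_mul_monic_left (hG ▸ hf)
  have hco : IsCoprime (N ^ n) G := (hNi.coprime_iff_not_dvd.2 hNG).pow_left
  obtain ⟨P1, P2, hP1, hP2, rfl, h1, h2⟩ := quat_split hNm hN2 hh G n P hPm (hG ▸ hPf)
  obtain ⟨D1, D2, hD1, hD2, hp1, hp2, hsum⟩ :=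
    dual_split hFm hGm hco hP1 hP2 h1 h2 hDd hPD
  have hGf : G ∣ f := ⟨N ^ n, by rw [hG, mul_comm]⟩
  have hGd : G.natDegree < d := by
    have := congrArg natDegree hG
    rw [hFm.natDegree_mul hGm, hNm.natDegree_pow, hN2] at this
    omega
  obtain ⟨r, Ms, Ns, ns, k1, k2, k3, k4, k5, k6, k7⟩ := ih _ hGd G rfl hGm
    (fun a ha => hroot a (ha.dvd hGf)) (mp P2 D2) (mp_monic hP2 hD2)
    ((mp_norm_iff _ _ _).2 ⟨h2, hp2⟩)
  have hcop : ∀ i, IsCoprime N (Ns i) := fun i =>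
    hNi.coprime_iff_not_dvd.2 (fun h => hNG (h.trans (k7 i)))
  refine ⟨r + 1, Fin.cons (mp P1 D1) Ms, Fin.cons N Ns, Fin.cons n ns, ?_, ?_, ?_, ?_, ?_, ?_, ?_⟩
  · intro i; refine Fin.cases ?_ (fun i => ?_) i
    · exact mp_monic hP1 hD1
    · exact k1 i
  · intro i; refine Fin.cases ?_ (fun i => ?_) i
    · exact ⟨hNm, hNi, hN2⟩
    · exact k2 i
  · intro i j
    refine Fin.cases ?_ (fun i => ?_) i <;> refine Fin.cases ?_ (fun j => ?_) j
    · intro h; exact absurd rfl h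
    · intro _; exact hcop j
    · intro _; exact (hcop i).symm
    · intro h; exact k3 i j (fun e => h (by rw [e]))
  · intro i; refine Fin.cases ?_ (fun i => ?_) i
    · exact hn0
    · exact k4 i
  · intro i; refine Fin.cases ?_ (fun i => ?_) i
    · exact (mp_norm_iff _ _ _).2 ⟨h1, hp1⟩
    · exact k5 i
  · rw [List.ofFn_succ, List.prod_cons]
    simp only [Fin.cons_zero, Fin.cons_succ]
    rw [← k6, mp_mul, ← hsum]
  · intro i; refine Fin.cases ?_ (fun i => ?_) i
    · exact hNf
    · exact (k7 i).trans hGf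

end main_part

/-- Every bounded monic reduced motion polynomial decomposes into monic motion
polynomial factors of primary norm. -/
theorem primary_norm_decomposition
    (M : DHq[X]) (hmonic : M.Monic) (hmotion : IsMotion M)
    (hred : ReducedD M) (hbdd : BoundedD M) :
    ∃ (r : ℕ) (Ms : Fin r → DHq[X]) (Ns : Fin r → ℝ[X]) (ns : Fin r → ℕ),
      (∀ i, (Ms i).Monic ∧ IsMotion (Ms i)) ∧
      (∀ i, (Ns i).Monic ∧ Irreducible (Ns i) ∧ (Ns i).natDegree = 2) ∧
      (∀ i j, i ≠ j → IsCoprime (Ns i) (Ns j)) ∧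
      (∀ i, 0 < ns i) ∧
      (∀ i, Ms i * cstar (Ms i) = dPoly (Ns i ^ ns i)) ∧
      M = (List.ofFn Ms).prod := by
  obtain ⟨f, hf0, hMf⟩ := hmotion
  obtain ⟨P, D, rfl⟩ := exists_mp M
  obtain ⟨hPm, hDd⟩ := of_mp_monic hmonic
  obtain ⟨hPf, hPD⟩ := (mp_norm_iff P D f).1 hMf
  have hfm : f.Monic := by
    have h : (qPoly f).Monic := hPf ▸ hPm.mul (monic_cstar hPm)
    exact (Polynomial.monic_map_iff (f := algebraMap ℝ Hq)).1 h
  have hroot : ∀ a, ¬ f.IsRoot a := by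
    intro a ha
    obtain ⟨g, rfl⟩ := dvd_iff_isRoot.2 ha
    apply hbdd a
    rw [primal_mp]
    exact root_dvd (hPf.trans (qPoly_mul _ _))
  obtain ⟨r, Ms, Ns, ns, k1, k2, k3, k4, k5, k6, _⟩ :=
    main_aux _ f rfl hfm hroot _ hmonic hMf
  exact ⟨r, Ms, Ns, ns, fun i => ⟨k1 i, _, pow_ne_zero _ (k2 i).1.ne_zero, k5 i⟩, k2, k3, k4, k5, k6⟩
end

section
/- Let M = c + εD ∈ 𝔻ℍ[t] be a bounded monic reduced translational motion polynomial of degree 2m with c ∈ ℝ[t], D ∈ ℍ[t], and ν(M) = c² = N^{2m} for some irreducible quadratic N ∈ ℝ[t]. If M admits a factorization into monic linear motion polynomial factors, then there exist quaternions p₁, …, p_m, d₁, …, d_m, d'₁, …, d'_m ∈ ℍ such that M = (t − p₁ − εd₁)⋯(t − p_m − εd_m)·(t − p_m* − εd'_m)⋯(t − p₁* − εd'₁), where every displayed linear factor is a motion polynomial. -/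
open Polynomial DualNumber TrivSqZeroExt

lemma dPoly_comm (f : ℝ[X]) (A : DHq[X]) : dPoly f * A = A * dPoly f := by
  unfold dPoly dhQ qPoly
  rw [Polynomial.map_map]
  induction f using Polynomial.induction_on' with
  | add p q hp hq => rw [Polynomial.map_add, add_mul, mul_add, hp, hq]
  | monomial n a =>
    rw [Polynomial.map_monomial]
    ext1 k
    rw [← Polynomial.C_mul_X_pow_eq_monomial, mul_assoc, Polynomial.X_pow_mul, ← mul_assoc,
      ← mul_assoc]
    simp only [Polynomial.coeff_mul_X_pow', Polynomial.coeff_C_mul, Polynomial.coeff_mul_C]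
    split_ifs
    · exact Algebra.commutes (A := DHq) a _
    · rfl

lemma eps_comm (A : DHq[X]) : Polynomial.C (ε : DHq) * A = A * Polynomial.C ε := by
  ext1 k
  rw [Polynomial.coeff_C_mul, Polynomial.coeff_mul_C]
  ext <;> simp

lemma eps_sq : Polynomial.C (ε : DHq) * Polynomial.C ε = 0 := by
  rw [← Polynomial.C_mul]; simp

lemma dhQ_mul (A B : Hq[X]) : dhQ (A * B) = dhQ A * dhQ B := by
  simp [dhQ]

lemma primal_mul (A B : DHq[X]) : primal (A * B) = primal A * primal B := by
  simp [primal]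

lemma decomp (A : DHq[X]) : ∃ E : Hq[X], A = dhQ (primal A) + Polynomial.C ε * dhQ E := by
  induction A using Polynomial.induction_on' with
  | add p q hp hq =>
    obtain ⟨E, hE⟩ := hp
    obtain ⟨F, hF⟩ := hq
    refine ⟨E + F, ?_⟩
    have h1 : dhQ (primal (p + q)) = dhQ (primal p) + dhQ (primal q) := by simp [dhQ, primal]
    have h2 : dhQ (E + F) = dhQ E + dhQ F := by simp [dhQ]
    rw [h1, h2, mul_add]
    nth_rewrite 1 [hE, hF]
    abel
  | monomial n a =>
    refine ⟨Polynomial.monomial n a.snd, ?_⟩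
    simp only [dhQ, primal, Polynomial.map_monomial, Polynomial.C_mul_monomial]
    rw [← map_add]
    congr 1
    ext <;> simp

lemma primal_lin (h : DHq) : primal (Polynomial.X - Polynomial.C h) =
    Polynomial.X - Polynomial.C h.fst := by
  simp [primal]

lemma lin_eq (h : DHq) : lin h.fst h.snd = Polynomial.X - Polynomial.C h := by
  have : h = inl h.fst - ε * inl (-h.snd) := by ext <;> simp
  have e : lin h.fst h.snd = Polynomial.X - Polynomial.C (inl h.fst) +
      Polynomial.C (ε * inl (-h.snd)) := by
    rw [Polynomial.C_mul, lin, mp, ← Polynomial.C_neg]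
    simp only [dhQ, Polynomial.map_sub, Polynomial.map_X, Polynomial.map_C]
    rfl
  rw [e]
  conv_rhs => rw [this, Polynomial.C_sub]
  abel

/-- product of two with primal parts divisible by N. -/
lemma dvd_of_primal (N : ℝ[X]) (A B : DHq[X]) (hA : RDvdQ N (primal A))
    (hB : RDvdQ N (primal B)) : RDvdD N (A * B) := by
  obtain ⟨A', hA'⟩ := hA
  obtain ⟨B', hB'⟩ := hB
  obtain ⟨E, hE⟩ := decomp A
  obtain ⟨F, hF⟩ := decomp B
  rw [hA', dhQ_mul] at hE
  rw [hB', dhQ_mul] at hF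
  refine ⟨dhQ A' * B + Polynomial.C ε * dhQ E * dhQ B', ?_⟩
  have e1 : A * B = dPoly N * dhQ A' * B + Polynomial.C ε * dhQ E * B := by
    nth_rewrite 1 [hE]; rw [add_mul]; rfl
  have e2 : Polynomial.C ε * dhQ E * B = dPoly N * (Polynomial.C ε * dhQ E * dhQ B') := by
    have z : Polynomial.C ε * dhQ E * (Polynomial.C ε * dhQ F) = 0 := by
      rw [eps_comm (dhQ E), mul_assoc, ← mul_assoc (Polynomial.C ε), eps_sq]; simp
    nth_rewrite 1 [hF]
    rw [mul_add, z, add_zero]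
    change _ * (dPoly N * _) = _
    rw [← mul_assoc, ← dPoly_comm, mul_assoc]
  rw [e1, e2, mul_add, mul_assoc]

/-- product of linear quaternion factors -/
noncomputable def qprod (l : List Hq) : Hq[X] := (l.map fun p => Polynomial.X - Polynomial.C p).prod

/-- product of linear dual quaternion factors -/
noncomputable def dprod (l : List DHq) : DHq[X] := (l.map fun p => Polynomial.X - Polynomial.C p).prod

lemma qprod_append (u v : List Hq) : qprod (u ++ v) = qprod u * qprod v := by simp [qprod]
lemma qprod_cons (p : Hq) (v : List Hq) :
    qprod (p :: v) = (Polynomial.X - Polynomial.C p) * qprod v := by simp [qprod]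
lemma dprod_append (u v : List DHq) : dprod (u ++ v) = dprod u * dprod v := by simp [dprod]
lemma dprod_cons (p : DHq) (v : List DHq) :
    dprod (p :: v) = (Polynomial.X - Polynomial.C p) * dprod v := by simp [dprod]

lemma dprod_deg (L : List DHq) : (dprod L).Monic ∧ (dprod L).natDegree = L.length := by
  induction L with
  | nil => simp [dprod]
  | cons h L ih =>
    have hm := Polynomial.monic_X_sub_C h
    rw [dprod_cons]
    refine ⟨hm.mul ih.1, ?_⟩
    rw [hm.natDegree_mul ih.1, ih.2, Polynomial.natDegree_X_sub_C, List.length_cons, add_comm]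

lemma primal_dprod (L : List DHq) : primal (dprod L) = qprod (L.map fun h => h.fst) := by
  induction L with
  | nil => simp [dprod, qprod, primal]
  | cons h L ih => rw [dprod_cons, primal_mul, primal_lin, ih, List.map_cons, qprod_cons]

/-- `p` lies on the sphere of `N`. -/
def Sph (N : ℝ[X]) (p : Hq) : Prop :=
  (Polynomial.X - Polynomial.C p) * (Polynomial.X - Polynomial.C (star p)) = qPoly N

lemma two_mul_lin (p q : Hq) :
    (Polynomial.X - Polynomial.C p) * (Polynomial.X - Polynomial.C q) =
    (Polynomial.X - Polynomial.C p) * (Polynomial.X - Polynomial.C (star p)) +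
    (Polynomial.X - Polynomial.C p) * Polynomial.C (star p - q) := by
  rw [Polynomial.C_sub, ← mul_add]; congr 1; abel

lemma step (N : ℝ[X]) (A : Hq[X]) (p q : Hq) (hp : Sph N p) (hq : q ≠ star p)
    (h : RDvdQ N (A * (Polynomial.X - Polynomial.C p) * (Polynomial.X - Polynomial.C q))) :
    RDvdQ N (A * (Polynomial.X - Polynomial.C p)) := by
  obtain ⟨B, hB⟩ := h
  have hw : star p - q ≠ 0 := sub_ne_zero.2 (Ne.symm hq)
  rw [mul_assoc, two_mul_lin, hp, mul_add, ← mul_assoc] at hB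
  refine ⟨(B - A) * Polynomial.C (star p - q)⁻¹, ?_⟩
  have h2 : A * (Polynomial.X - Polynomial.C p) * Polynomial.C (star p - q) =
      qPoly N * (B - A) := by
    rw [mul_sub (qPoly N), ← hB, qPoly_comm]; abel
  rw [← mul_assoc, ← h2, mul_assoc, ← Polynomial.C_mul, mul_inv_cancel₀ hw]; simp

lemma exists_pair (N : ℝ[X]) (hN : N.natDegree = 2) (l : List Hq) (hl : ∀ p ∈ l, Sph N p)
    (h : RDvdQ N (qprod l)) : ∃ a b p, l = a ++ p :: star p :: b := by
  have deg : ∀ A : Hq[X], A.Monic → A.natDegree ≤ 1 → ¬ RDvdQ N A := by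
    rintro A hA h1 ⟨B, hB⟩
    have hqN : (qPoly N).natDegree = 2 := by
      rw [qPoly, Polynomial.natDegree_map, hN]
    have hB0 : B ≠ 0 := by rintro rfl; rw [mul_zero] at hB; exact hA.ne_zero hB
    have : qPoly N ≠ 0 := by rintro h0; rw [h0] at hqN; simp at hqN
    rw [hB, Polynomial.natDegree_mul this hB0] at h1
    omega
  induction l using List.reverseRecOn with
  | nil => exact absurd h (deg _ (by simp [qprod]) (by simp [qprod]))
  | append_singleton l q ih =>
    rcases List.eq_nil_or_concat l with rfl | ⟨l', p, rfl⟩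
    · refine absurd h (deg _ ?_ ?_)
      · simpa [qprod] using Polynomial.monic_X_sub_C q
      · simp [qprod]
    · by_cases hq : q = star p
      · exact ⟨l', [], p, by simp [hq]⟩
      · have := step N (qprod l') p q (hl p (by simp)) hq (by
          simpa [qprod, mul_assoc] using h)
        obtain ⟨a, b, r, e⟩ := ih (fun x hx => hl x (List.mem_append_left _ hx)) (by
          simpa [qprod] using this)
        exact ⟨a, b ++ [q], r, by simp only [List.concat_eq_append] at e; simp [e]⟩

/-- Dyck words. -/
inductive Dy : List Hq → Prop
  | nil : Dy []
  | wrap (p : Hq) (l : List Hq) : Dy l → Dy (p :: (l ++ [star p]))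
  | app (u v : List Hq) : Dy u → Dy v → Dy (u ++ v)

lemma Dy.insert {l : List Hq} (h : Dy l) (p : Hq) :
    ∀ a b, l = a ++ b → Dy (a ++ p :: star p :: b) := by
  have hp : Dy [p, star p] := Dy.wrap p [] Dy.nil
  induction h with
  | nil =>
    intro a b e
    obtain ⟨rfl, rfl⟩ := List.append_eq_nil_iff.1 e.symm
    exact hp
  | wrap q l hl ih =>
    intro a b e
    rcases a with _ | ⟨q', a⟩
    · simp only [List.nil_append] at e
      subst e
      exact Dy.app [p, star p] _ hp (Dy.wrap q l hl)
    · simp only [List.cons_append, List.cons.injEq] at e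
      obtain ⟨rfl, e⟩ := e
      rcases List.eq_nil_or_concat b with rfl | ⟨b', r, rfl⟩
      · simp only [List.append_nil] at e
        subst e
        exact Dy.app _ [p, star p] (Dy.wrap q l hl) hp
      · rw [List.concat_eq_append, ← List.append_assoc] at e
        obtain ⟨e1, e2⟩ := List.append_inj' e rfl
        simp only [List.cons.injEq, and_true] at e2
        subst e2
        have := Dy.wrap q _ (ih a b' e1)
        simpa using this
  | app u v hu hv ihu ihv =>
    intro a b e
    rcases List.append_eq_append_iff.1 e with ⟨w, rfl, rfl⟩ | ⟨w, rfl, rfl⟩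
    · have := Dy.app _ _ hu (ihv w b rfl)
      simpa using this
    · have := Dy.app _ _ (ihu a w rfl) hv
      simpa using this

lemma dy_of_prod (N : ℝ[X]) (hN : N.natDegree = 2) (m : ℕ) : ∀ (l : List Hq),
    (∀ p ∈ l, Sph N p) → l.length = 2 * m → qprod l = qPoly (N ^ m) → Dy l := by
  induction m with
  | zero =>
    intro l _ h _
    have : l = [] := List.length_eq_zero_iff.1 (by simpa using h)
    rw [this]; exact Dy.nil
  | succ m ih =>
    intro l hl hlen hprod
    obtain ⟨a, b, p, rfl⟩ := exists_pair N hN l hl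
      ⟨qPoly (N ^ m), by rw [hprod, pow_succ', qPoly_mul]⟩
    refine (ih (a ++ b) ?_ ?_ ?_).insert p a b rfl
    · intro x hx; apply hl; simp at hx ⊢; tauto
    · simp at hlen ⊢; omega
    · have hp : Sph N p := hl p (by simp)
      have hqN : qPoly N ≠ 0 := by
        have : (qPoly N).natDegree = 2 := by rw [qPoly, Polynomial.natDegree_map, hN]
        rintro h0; rw [h0] at this; simp at this
      apply mul_left_cancel₀ hqN
      rw [← qPoly_mul, ← pow_succ', ← hprod, qprod_append, qprod_append, qprod_cons, qprod_cons,
        ← mul_assoc (Polynomial.X - _), hp, ← mul_assoc, ← mul_assoc, qPoly_comm]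

lemma Dy.dvd (N : ℝ[X]) {l : List Hq} (h : Dy l) (hl : ∀ p ∈ l, Sph N p) :
    l = [] ∨ RDvdQ N (qprod l) := by
  induction h with
  | nil => exact Or.inl rfl
  | wrap p l _ ih =>
    right
    rw [qprod_cons, qprod_append]
    rcases ih (fun x hx => hl x (by simp [hx])) with rfl | ⟨B, hB⟩
    · refine ⟨1, ?_⟩
      have : Sph N p := hl p (by simp)
      rw [mul_one, ← this]; simp [qprod]
    · refine ⟨(Polynomial.X - Polynomial.C p) * B * qprod [star p], ?_⟩
      rw [hB, mul_assoc (qPoly N), ← mul_assoc, ← qPoly_comm]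
      simp only [mul_assoc]
  | app u v _ _ ihu ihv =>
    rcases ihu (fun x hx => hl x (by simp [hx])) with rfl | ⟨B, hB⟩
    · simpa using ihv (fun x hx => hl x (by simp [hx]))
    · exact Or.inr ⟨B * qprod v, by rw [qprod_append, hB, mul_assoc]⟩

/-- nested shape -/
def Shape (L : List DHq) : Prop := ∃ Q : List (Hq × Hq × Hq), L.length = 2 * Q.length ∧
  (∀ x ∈ Q, IsMotion (lin x.1 x.2.1) ∧ IsMotion (lin (star x.1) x.2.2)) ∧
  dprod L = (Q.map fun x => lin x.1 x.2.1).prod *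
    ((Q.map fun x => lin (star x.1) x.2.2).reverse).prod

lemma main_ind (N : ℝ[X]) {l : List Hq} (h : Dy l) (hl : ∀ p ∈ l, Sph N p) :
    ∀ L : List DHq, (∀ h ∈ L, IsMotion (Polynomial.X - Polynomial.C h)) →
      L.map (fun h => h.fst) = l → RDvdD N (dprod L) ∨ Shape L := by
  induction h with
  | nil =>
    intro L _ e
    have : L = [] := by simpa using e
    subst this
    exact Or.inr ⟨[], by simp, by simp, by simp [dprod]⟩
  | wrap p l hd ih =>
    intro L hL e
    obtain ⟨h1, L1, rfl, e1, e2⟩ := List.map_eq_cons_iff.1 e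
    obtain ⟨L2, L3, rfl, e3, e4⟩ := List.map_eq_append_iff.1 e2
    obtain ⟨h2, L4, rfl, e5, e6⟩ := List.map_eq_cons_iff.1 e4
    obtain rfl : L4 = [] := by simpa using e6
    have hm1 := hL h1 (by simp)
    have hm2 := hL h2 (by simp)
    have e7 : dprod [h2] = Polynomial.X - Polynomial.C h2 := by simp [dprod]
    rw [dprod_cons, dprod_append, e7]
    rcases ih (fun x hx => hl x (by simp [hx])) L2 (fun x hx => hL x (by simp [hx])) e3 with
      ⟨B, hB⟩ | ⟨Q, hQ1, hQ2, hQ3⟩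
    · left
      refine ⟨(Polynomial.X - Polynomial.C h1) * B * (Polynomial.X - Polynomial.C h2), ?_⟩
      rw [hB, mul_assoc (dPoly N), ← mul_assoc, ← dPoly_comm]
      simp only [mul_assoc]
    · right
      refine ⟨(p, h1.snd, h2.snd) :: Q, ?_, ?_, ?_⟩
      · simp [hQ1]; ring
      · intro x hx
        rcases List.mem_cons.1 hx with rfl | hx
        · refine ⟨?_, ?_⟩
          · simp only [← e1, lin_eq]; exact hm1
          · simp only [← e5, lin_eq]; exact hm2
        · exact hQ2 x hx
      · rw [dprod_cons, dprod_append, e7, hQ3]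
        simp only [List.map_cons, List.prod_cons, List.reverse_cons, List.prod_append,
          List.prod_nil, mul_one]
        simp only [← e1]
        rw [lin_eq, e1, ← e5, lin_eq]
        simp only [mul_assoc]
  | app u v hu hv ihu ihv =>
    intro L hL e
    have hu' : ∀ p ∈ u, Sph N p := fun x hx => hl x (by simp [hx])
    have hv' : ∀ p ∈ v, Sph N p := fun x hx => hl x (by simp [hx])
    obtain ⟨L2, L3, rfl, e3, e4⟩ := List.map_eq_append_iff.1 e
    have hL2 : ∀ h ∈ L2, IsMotion (Polynomial.X - Polynomial.C h) :=
      fun x hx => hL x (by simp [hx])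
    have hL3 : ∀ h ∈ L3, IsMotion (Polynomial.X - Polynomial.C h) :=
      fun x hx => hL x (by simp [hx])
    rcases hu.dvd N hu' with hu0 | hu1
    · have : L2 = [] := by simpa [hu0] using e3
      subst this
      exact ihv hv' _ hL3 e4
    rcases hv.dvd N hv' with hv0 | hv1
    · have : L3 = [] := by simpa [hv0] using e4
      subst this
      rw [List.append_nil]
      exact ihu hu' _ hL2 e3
    left
    rw [dprod_append]
    apply dvd_of_primal
    · rw [primal_dprod, e3]; exact hu1
    · rw [primal_dprod, e4]; exact hv1

lemma sph_of_root (N : ℝ[X]) (hmon : N.Monic) (hN : N.natDegree = 2) (hirr : Irreducible N)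
    (p : Hq) (h : Polynomial.eval p (qPoly N) = 0) : Sph N p := by
  have hNe : N = Polynomial.X ^ 2 + Polynomial.C (N.coeff 1) * Polynomial.X
      + Polynomial.C (N.coeff 0) := by
    have h2 : N.coeff 2 = 1 := by rw [← hN]; exact hmon
    conv_lhs => rw [N.as_sum_range' 3 (by omega)]
    simp only [Finset.sum_range_succ, Finset.sum_range_zero, ← Polynomial.C_mul_X_pow_eq_monomial,
      h2]
    simp
    ring
  have hroot : ∀ x : ℝ, ¬ x ^ 2 + N.coeff 1 * x + N.coeff 0 = 0 := by
    intro x hx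
    have : N.IsRoot x := by
      rw [Polynomial.IsRoot, hNe]; simpa using hx
    have := Polynomial.degree_eq_one_of_irreducible_of_root hirr this
    have h1 : N.natDegree = 1 := Polynomial.natDegree_eq_of_degree_eq_some this
    omega
  generalize N.coeff 1 = a at *
  generalize N.coeff 0 = b at *
  have hq : qPoly N = Polynomial.X ^ 2 + Polynomial.C (a : Hq) * Polynomial.X
      + Polynomial.C (b : Hq) := by
    rw [hNe]; simp [qPoly]
  rw [hq] at h
  have h' : p * p + (a : Hq) * p + (b : Hq) = 0 := by
    simpa [Polynomial.eval_add, pow_two, Polynomial.eval_mul_X, Polynomial.eval_C] using h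
  have r0 := congrArg (fun x : Hq => x.re) h'
  have r1 := congrArg (fun x : Hq => x.imI) h'
  have r2 := congrArg (fun x : Hq => x.imJ) h'
  have r3 := congrArg (fun x : Hq => x.imK) h'
  simp at r0 r1 r2 r3
  change _ = (0 : ℝ) at r0
  change _ = (0 : ℝ) at r1
  change _ = (0 : ℝ) at r2
  change _ = (0 : ℝ) at r3
  have s1 : p.imI * (2 * p.re + a) = 0 := by linarith
  have s2 : p.imJ * (2 * p.re + a) = 0 := by linarith
  have s3 : p.imK * (2 * p.re + a) = 0 := by linarith
  have ha : 2 * p.re + a = 0 := by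
    by_contra hne
    have t1 : p.imI = 0 := (mul_eq_zero.1 s1).resolve_right hne
    have t2 : p.imJ = 0 := (mul_eq_zero.1 s2).resolve_right hne
    have t3 : p.imK = 0 := (mul_eq_zero.1 s3).resolve_right hne
    apply hroot p.re
    rw [t1, t2, t3] at r0
    linarith
  have hA : (a : Hq) = -(p + star p) := by
    ext <;> simp
    linarith
  have hB : (b : Hq) = p * star p := by
    have ha' : a = -(2 * p.re) := by linarith
    subst ha'
    ext <;> simp <;> nlinarith
  rw [Sph, hq, hA, hB]
  have : Polynomial.X * Polynomial.C (star p) = Polynomial.C (star p) * Polynomial.X := by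
    rw [Polynomial.X_mul_C]
  rw [sub_mul, mul_sub, mul_sub, this]
  simp only [Polynomial.C_neg, Polynomial.C_add, Polynomial.C_mul]
  noncomm_ring

lemma sph_all (N : ℝ[X]) (hmon : N.Monic) (hN : N.natDegree = 2) (hirr : Irreducible N) (m : ℕ)
    (l : List Hq) (hl : qprod l = qPoly (N ^ m)) : ∀ p ∈ l, Sph N p := by
  intro p hp
  obtain ⟨a, b, rfl⟩ := List.append_of_mem hp
  apply sph_of_root N hmon hN hirr
  have h0 : qPoly (N ^ m) ≠ 0 := ((hmon.pow m).map _).ne_zero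
  rw [qprod_append, qprod_cons, ← mul_assoc] at hl
  have hB : qprod b ≠ 0 := by
    intro h; rw [h, mul_zero] at hl; exact h0 hl.symm
  have h1 : qprod b * qprod a * (Polynomial.X - Polynomial.C p) = qPoly (N ^ m) := by
    apply mul_right_cancel₀ hB
    rw [qPoly_comm, ← hl]
    simp only [mul_assoc]
  have h2 : Polynomial.eval p (qPoly (N ^ m)) = 0 := by
    rw [← h1]; exact Polynomial.eval_mul_X_sub_C _
  have h3 : ∀ f : ℝ[X], Polynomial.eval p (qPoly f) = Polynomial.aeval p f := by
    intro f; rw [qPoly, Polynomial.eval_map_algebraMap]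
  rw [h3, map_pow] at h2
  rw [h3]
  exact eq_zero_of_pow_eq_zero h2

/-- Shape of a linear factorization of a bounded monic reduced translational motion
polynomial of primary norm. -/
theorem translational_primary_factorization_shape
    (m : ℕ) (c : ℝ[X]) (D : Hq[X]) (N : ℝ[X]) (M : DHq[X])
    (hM : M = mp (qPoly c) D)
    (hmonic : M.Monic) (hmotion : IsMotion M)
    (hred : ReducedD M) (hbdd : BoundedD M)
    (hdeg : M.natDegree = 2 * m)
    (hN2 : N.natDegree = 2) (hNirr : Irreducible N)
    (hcN : c ^ 2 = N ^ (2 * m))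
    (hnorm : M * cstar M = dPoly (c ^ 2))
    (hfact : HasLinFact M) :
    ∃ p d d' : Fin m → Hq,
      (∀ i, IsMotion (lin (p i) (d i))) ∧
      (∀ i, IsMotion (lin (star (p i)) (d' i))) ∧
      M = (List.ofFn fun i => lin (p i) (d i)).prod *
          ((List.ofFn fun i => lin (star (p i)) (d' i)).reverse).prod := by
  obtain ⟨L, hL, hML⟩ := hfact
  change M = dprod L at hML
  have hN0 : N ≠ 0 := hNirr.ne_zero
  have hpr : primal M = qPoly c := by
    rw [hM]
    ext1 k
    simp [primal, mp, dhQ]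
  have hcm : c.Monic := by
    have : (primal M).Monic := hmonic.map _
    rw [hpr] at this
    exact Polynomial.monic_of_injective (algebraMap ℝ Hq).injective this
  set N0 : ℝ[X] := N * Polynomial.C N.leadingCoeff⁻¹ with hN0def
  have hmon : N0.Monic := Polynomial.monic_mul_leadingCoeff_inv hN0
  have hunit : IsUnit (Polynomial.C N.leadingCoeff⁻¹) :=
    Polynomial.isUnit_C.2 (IsUnit.mk0 _ (inv_ne_zero (Polynomial.leadingCoeff_ne_zero.2 hN0)))
  have hass : Associated N N0 := (associated_mul_unit_right N _ hunit)
  have hirr : Irreducible N0 := hass.irreducible hNirr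
  have hdeg0 : N0.natDegree = 2 := by
    rw [← hN2]; exact (Polynomial.natDegree_eq_of_degree_eq (Polynomial.degree_eq_degree_of_associated hass)).symm
  have hc : c = N0 ^ m := by
    apply Polynomial.eq_of_monic_of_associated hcm (hmon.pow m)
    have h1 : c ^ 2 = (N ^ m) ^ 2 := by rw [hcN]; ring
    have h2 : Associated c (N ^ m) := by
      rcases sq_eq_sq_iff_eq_or_eq_neg.1 h1 with h | h
      · rw [h]
      · rw [h]; exact Associated.neg_left (Associated.refl _)
    exact h2.trans (hass.pow_pow)
  have hq : qprod (L.map fun h => h.fst) = qPoly (N0 ^ m) := by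
    rw [← primal_dprod, ← hML, hpr, hc]
  have hsph := sph_all N0 hmon hdeg0 hirr m _ hq
  have hlen : L.length = 2 * m := by
    rw [← hdeg, hML, (dprod_deg L).2]
  have hdy := dy_of_prod N0 hdeg0 m _ hsph (by simpa using hlen) hq
  rcases main_ind N0 hdy hsph L hL rfl with h | ⟨Q, hQ1, hQ2, hQ3⟩
  · rw [← hML] at h
    have := hred N0 hmon h
    rw [this] at hdeg0
    simp at hdeg0
  · obtain rfl : m = Q.length := by omega
    refine ⟨fun i => (Q.get i).1, fun i => (Q.get i).2.1, fun i => (Q.get i).2.2,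
      fun i => (hQ2 _ (Q.get_mem i)).1, fun i => (hQ2 _ (Q.get_mem i)).2, ?_⟩
    have key : ∀ f : Hq × Hq × Hq → DHq[X], (List.ofFn fun i => f (Q.get i)) = Q.map f := by
      intro f
      conv_rhs => rw [← List.ofFn_get Q]
      rw [List.map_ofFn]; rfl
    rw [hML, hQ3, ← key, ← key]
end
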